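/- arXiv:1606.03851 — 2 statements merged into one kernel-verified Lean document; each statement's English description precedes it below -/
import Mathlib

section
/- (Lemma 2.) Let g, d, A, P_S, P_E > 0 be reals with α = g/d > 1 and P_E ≥ α(1 + g·P_S)/A. Then: (i) min{1, (−1 + √(1 + 4·P_S·P_E·d·A))/(2·g·P_S)} = 1, so the maximum-destination-SNR function takes the linear form γ_D^max(ρ) = (1 + ρ·g/d)·P_S·d on all of [0, 1]; (ii) ρ* = (1 − 1/α)/2 lies in (0, 1/2) and is the unique solution in [0, 1] of the equation (1 + ρ·g/d)·P_S·d = (1 − ρ)·g·P_S; and (iii) at ρ = ρ* both sides equal (g + d)·P_S/2. -/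
/-- Lemma 2: if `α = g/d > 1` and `P_E ≥ α(1 + g P_S)/A`, then `ρ₁ = 1` so the maximum
destination SNR is the linear function `(1 + ρ g/d) P_S d` on `[0,1]`; the ratio
`ρ* = (1 − 1/α)/2 ∈ (0, 1/2)` is the unique solution in `[0,1]` of
`(1 + ρ g/d) P_S d = (1 − ρ) g P_S`, and at `ρ*` both sides equal `(g + d) P_S/2`. -/
theorem lemma2_closed_form (g d A P_S P_E : ℝ) (hg : 0 < g) (hd : 0 < d) (hA : 0 < A)
    (hPS : 0 < P_S) (hPE : 0 < P_E)
    (hα : 1 < g / d) (hP : P_E ≥ (g / d) * (1 + g * P_S) / A) :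
    let ρ₁ : ℝ := min 1 ((-1 + Real.sqrt (1 + 4 * P_S * P_E * d * A)) / (2 * g * P_S))
    let gammaDmax : ℝ → ℝ := fun ρ =>
      if ρ ≤ ρ₁ then (1 + ρ * g / d) * P_S * d
      else (Real.sqrt (1 + ρ * g * P_S) + Real.sqrt (g * A / d) * Real.sqrt (ρ * P_E)) ^ 2 *
        P_S * d / (1 + ρ * g * P_S + A * P_E)
    let ρstar : ℝ := (1 - 1 / (g / d)) / 2
    ρ₁ = 1 ∧
    (∀ ρ ∈ Set.Icc (0 : ℝ) 1, gammaDmax ρ = (1 + ρ * g / d) * P_S * d) ∧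
    0 < ρstar ∧ ρstar < 1 / 2 ∧
    (∀ ρ ∈ Set.Icc (0 : ℝ) 1,
      ((1 + ρ * g / d) * P_S * d = (1 - ρ) * g * P_S ↔ ρ = ρstar)) ∧
    (1 + ρstar * g / d) * P_S * d = (g + d) * P_S / 2 ∧
    (1 - ρstar) * g * P_S = (g + d) * P_S / 2 := by
  intro ρ₁ gammaDmax ρstar
  have hdg : d < g := by rwa [lt_div_iff₀ hd, one_mul] at hα
  have hkey : g * (1 + g * P_S) ≤ P_E * d * A := by
    have h1 : (g / d) * (1 + g * P_S) ≤ P_E * A := (div_le_iff₀ hA).mp hP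
    have h2 := mul_le_mul_of_nonneg_right h1 hd.le
    have h3 : (g / d) * (1 + g * P_S) * d = g * (1 + g * P_S) := by field_simp
    linarith
  have h1 : ρ₁ = 1 := by
    apply min_eq_left
    have hs : 1 + 2 * g * P_S ≤ Real.sqrt (1 + 4 * P_S * P_E * d * A) := by
      apply Real.le_sqrt_of_sq_le
      have := mul_le_mul_of_nonneg_left hkey hPS.le
      nlinarith
    rw [le_div_iff₀ (by positivity)]
    linarith
  have hstar : ρstar = (g - d) / (2 * g) := by
    simp only [ρstar]
    field_simp
  have hlin : ∀ ρ : ℝ, (1 + ρ * g / d) * P_S * d = (d + ρ * g) * P_S := by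
    intro ρ
    field_simp
  have hsg : ρstar * g = (g - d) / 2 := by
    rw [hstar]
    field_simp
  refine ⟨h1, ?_, ?_, ?_, ?_, ?_, ?_⟩
  · intro ρ hρ
    have : ρ ≤ ρ₁ := by rw [h1]; exact hρ.2
    simp only [gammaDmax, if_pos this]
  · rw [hstar]
    exact div_pos (by linarith) (by linarith)
  · rw [hstar, div_lt_div_iff₀ (by linarith) (by norm_num)]
    linarith
  · intro ρ _
    rw [hlin]
    constructor
    · intro h
      have h2 : d + ρ * g = (1 - ρ) * g := mul_right_cancel₀ hPS.ne' h
      apply mul_right_cancel₀ hg.ne'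
      linarith
    · intro h
      rw [h]
      congr 1
      linarith
  · rw [hlin, hsg]
    ring
  · rw [sub_mul, hsg]
    ring
end

section
/- (Case 1: existence and uniqueness of the optimal power-splitting ratio.) Let g, d, A, P_S, P_E > 0 be reals and define ρ₁ = min{1, (−1 + √(1 + 4·P_S·P_E·d·A))/(2·g·P_S)} and the piecewise function γ_D^max(ρ) = (1 + ρ·g/d)·P_S·d for 0 ≤ ρ ≤ ρ₁ and γ_D^max(ρ) = (√(1 + ρ·g·P_S) + √(g·A/d)·√(ρ·P_E))²·P_S·d/(1 + ρ·g·P_S + A·P_E) for ρ₁ < ρ ≤ 1, and the linear function γ_E(ρ) = (1 − ρ)·g·P_S. Then: (i) γ_D^max is continuous and strictly increasing on [0, 1]; (ii) γ_E is strictly decreasing with γ_E(1) = 0 < γ_D^max(1); and (iii) if d < g (i.e. γ_D^max(0) < γ_E(0)), the equation γ_D^max(ρ) = γ_E(ρ) has a unique solution ρ* in (0, 1). -/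
lemma glue_aux (L F : ℝ → ℝ) (r : ℝ) (hr : 0 ≤ r) (hL : StrictMono L) (hLc : Continuous L)
    (hF : StrictMonoOn F (Set.Ici 0)) (hFc : ContinuousOn F (Set.Ici 0)) (h : L r = F r) :
    Continuous (fun x => if x ≤ r then L x else F x) ∧
      StrictMono (fun x => if x ≤ r then L x else F x) := by
  constructor
  · have e : (fun x => if x ≤ r then L x else F x) =
        fun x => L (min x r) + F (max x r) - F r := by
      funext x
      split_ifs with hx
      · rw [min_eq_left hx, max_eq_right hx]; ring
      · rw [min_eq_right (not_le.1 hx).le, max_eq_left (not_le.1 hx).le, h]; ring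
    rw [e]
    have h2 : Continuous fun x => F (max x r) :=
      hFc.comp_continuous (by fun_prop) (fun x => le_trans hr (le_max_right x r))
    have h1 : Continuous fun x => L (min x r) := hLc.comp (by fun_prop)
    exact (h1.add h2).sub continuous_const
  · intro x y hxy
    dsimp only
    split_ifs with hx hy hy
    · exact hL hxy
    · have h1 : L x ≤ L r := hL.monotone hx
      have h2 : F r < F y := hF hr (hr.trans (not_le.1 hy).le) (not_le.1 hy)
      linarith
    · exact absurd (hxy.le.trans hy) hx
    · exact hF (hr.trans (not_le.1 hx).le) (hr.trans (not_le.1 hy).le) hxy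

lemma F_mono_aux (g d A P_S P_E : ℝ) (hg : 0 < g) (hd : 0 < d)
    (hA : 0 < A) (hPS : 0 < P_S) (hPE : 0 < P_E) :
    StrictMonoOn (fun ρ : ℝ =>
      (Real.sqrt (1 + ρ * g * P_S) + Real.sqrt (g * A / d) * Real.sqrt (ρ * P_E)) ^ 2 *
        P_S * d / (1 + ρ * g * P_S + A * P_E)) (Set.Ici 0) := by
  intro x hx y hy hxy
  have hx : 0 ≤ x := hx
  have hy : 0 ≤ y := hy
  have key : ∀ ρ : ℝ, 0 ≤ ρ →
      (Real.sqrt (1 + ρ * g * P_S) + Real.sqrt (g * A / d) * Real.sqrt (ρ * P_E)) ^ 2 *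
        P_S * d / (1 + ρ * g * P_S + A * P_E) =
      (Real.sqrt ((1 + ρ * g * P_S) / (1 + ρ * g * P_S + A * P_E)) + Real.sqrt (g * A / d) *
        Real.sqrt ((ρ * P_E) / (1 + ρ * g * P_S + A * P_E))) ^ 2 * (P_S * d) := by
    intro ρ hρ
    have hT : 0 < 1 + ρ * g * P_S + A * P_E := by positivity
    rw [Real.sqrt_div (show 0 ≤ 1 + ρ * g * P_S by positivity),
      Real.sqrt_div (show 0 ≤ ρ * P_E by positivity)]
    generalize Real.sqrt (g * A / d) = q
    have hs := Real.sq_sqrt hT.le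
    have hs0 := Real.sqrt_pos.2 hT
    set T := 1 + ρ * g * P_S + A * P_E
    set s := Real.sqrt T
    rw [← hs]
    field_simp
  dsimp only
  rw [key x hx, key y hy]
  have hTx : 0 < 1 + x * g * P_S + A * P_E := by positivity
  have hTy : 0 < 1 + y * g * P_S + A * P_E := by positivity
  have hgp : 0 < g * P_S := by positivity
  have hap : 0 < A * P_E := by positivity
  have m := mul_lt_mul_of_pos_right hxy hgp
  have m2 := mul_lt_mul_of_pos_right m hap
  have m3 := mul_lt_mul_of_pos_right hxy hPE
  have m4 := mul_lt_mul_of_pos_right m3 hap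
  have h1 : Real.sqrt ((1 + x * g * P_S) / (1 + x * g * P_S + A * P_E)) <
      Real.sqrt ((1 + y * g * P_S) / (1 + y * g * P_S + A * P_E)) := by
    apply Real.sqrt_lt_sqrt (by positivity)
    rw [div_lt_div_iff₀ hTx hTy]
    nlinarith
  have h2 : Real.sqrt ((x * P_E) / (1 + x * g * P_S + A * P_E)) ≤
      Real.sqrt ((y * P_E) / (1 + y * g * P_S + A * P_E)) := by
    apply Real.sqrt_le_sqrt
    rw [div_le_div_iff₀ hTx hTy]
    nlinarith
  have h3 := mul_le_mul_of_nonneg_left h2 (Real.sqrt_nonneg (g * A / d))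
  apply mul_lt_mul_of_pos_right _ (by positivity)
  exact pow_lt_pow_left₀ (by linarith) (by positivity) (by norm_num)

lemma F_eq_aux (g d A P_S P_E r : ℝ) (hg : 0 < g) (hd : 0 < d)
    (hA : 0 < A) (hPS : 0 < P_S) (hPE : 0 < P_E) (hr : 0 ≤ r)
    (h : (r * g * P_S) ^ 2 + r * g * P_S = P_S * P_E * d * A) :
    (1 + r * g / d) * P_S * d =
    (Real.sqrt (1 + r * g * P_S) + Real.sqrt (g * A / d) * Real.sqrt (r * P_E)) ^ 2 *
        P_S * d / (1 + r * g * P_S + A * P_E) := by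
  have hT : 0 < 1 + r * g * P_S + A * P_E := by positivity
  have hc : Real.sqrt (1 + r * g * P_S) * (Real.sqrt (g * A / d) * Real.sqrt (r * P_E))
      = r * g * (1 + r * g * P_S) / d := by
    rw [← Real.sqrt_mul (by positivity), ← Real.sqrt_mul (by positivity),
      Real.sqrt_eq_iff_eq_sq (by positivity) (by positivity)]
    field_simp
    have : A * P_E * d * P_S = (r * g * P_S) ^ 2 + r * g * P_S := by rw [h]; ring
    have h2 : A * P_E * d = r * g * (1 + r * g * P_S) := by
      apply mul_right_cancel₀ hPS.ne'
      rw [this]; ring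
    linear_combination r * h2
  rw [eq_div_iff hT.ne', add_sq, mul_pow, Real.sq_sqrt (by positivity),
    Real.sq_sqrt (by positivity), Real.sq_sqrt (by positivity), mul_assoc 2, hc]
  field_simp
  first
    | linear_combination -h
    | linear_combination h
    | (apply mul_right_cancel₀ hPS.ne'; linear_combination -h)

/-- Case 1 (existence and uniqueness of the optimal power-splitting ratio): the piecewise
function `γ_D^max` is continuous and strictly increasing on `[0,1]`, the linear function
`γ_E(ρ) = (1 − ρ) g P_S` is strictly decreasing with `γ_E(1) = 0 < γ_D^max(1)`, and if
`d < g` then the equation `γ_D^max(ρ) = γ_E(ρ)` has a unique solution in `(0,1)`. -/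
theorem case1_unique_intersection (g d A P_S P_E : ℝ) (hg : 0 < g) (hd : 0 < d)
    (hA : 0 < A) (hPS : 0 < P_S) (hPE : 0 < P_E) :
    let ρ₁ : ℝ := min 1 ((-1 + Real.sqrt (1 + 4 * P_S * P_E * d * A)) / (2 * g * P_S))
    let gammaDmax : ℝ → ℝ := fun ρ =>
      if ρ ≤ ρ₁ then (1 + ρ * g / d) * P_S * d
      else (Real.sqrt (1 + ρ * g * P_S) + Real.sqrt (g * A / d) * Real.sqrt (ρ * P_E)) ^ 2 *
        P_S * d / (1 + ρ * g * P_S + A * P_E)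
    let gammaE : ℝ → ℝ := fun ρ => (1 - ρ) * g * P_S
    ContinuousOn gammaDmax (Set.Icc 0 1) ∧
    StrictMonoOn gammaDmax (Set.Icc 0 1) ∧
    StrictAnti gammaE ∧
    gammaE 1 = 0 ∧ 0 < gammaDmax 1 ∧
    (d < g → ∃! ρ : ℝ, ρ ∈ Set.Ioo (0 : ℝ) 1 ∧ gammaDmax ρ = gammaE ρ) := by
  intro ρ₁ D E
  set r := (-1 + Real.sqrt (1 + 4 * P_S * P_E * d * A)) / (2 * g * P_S) with hrdef
  have hp : 0 < P_S * P_E * d * A := by positivity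
  have hs : 1 ≤ Real.sqrt (1 + 4 * P_S * P_E * d * A) := by
    rw [Real.one_le_sqrt]; nlinarith
  have hr : 0 ≤ r := div_nonneg (by linarith) (by positivity)
  have hreq : (r * g * P_S) ^ 2 + r * g * P_S = P_S * P_E * d * A := by
    have h1 : r * g * P_S = (-1 + Real.sqrt (1 + 4 * P_S * P_E * d * A)) / 2 := by
      rw [hrdef]; field_simp
    have h2 := Real.sq_sqrt (show 0 ≤ 1 + 4 * P_S * P_E * d * A by nlinarith)
    rw [h1]; linear_combination h2 / 4
  obtain ⟨hc, hm⟩ := glue_aux (fun ρ => (1 + ρ * g / d) * P_S * d)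
    (fun ρ => (Real.sqrt (1 + ρ * g * P_S) + Real.sqrt (g * A / d) * Real.sqrt (ρ * P_E)) ^ 2 *
        P_S * d / (1 + ρ * g * P_S + A * P_E)) r hr
    (by
      intro x y hxy
      dsimp only
      gcongr)
    (by fun_prop)
    (F_mono_aux g d A P_S P_E hg hd hA hPS hPE)
    (by
      apply ContinuousOn.div (by fun_prop) (by fun_prop)
      intro x hx
      have hx : 0 ≤ x := hx
      positivity)
    (F_eq_aux g d A P_S P_E r hg hd hA hPS hPE hr hreq)
  have heq : Set.EqOn D (fun x => if x ≤ r then (1 + x * g / d) * P_S * d else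
      (Real.sqrt (1 + x * g * P_S) + Real.sqrt (g * A / d) * Real.sqrt (x * P_E)) ^ 2 *
        P_S * d / (1 + x * g * P_S + A * P_E)) (Set.Icc 0 1) := by
    intro x hx
    have : x ≤ ρ₁ ↔ x ≤ r := by
      simp only [ρ₁, le_min_iff]
      exact ⟨fun h => h.2, fun h => ⟨hx.2, h⟩⟩
    simp only [D, this]
  have hDc : ContinuousOn D (Set.Icc 0 1) := hc.continuousOn.congr heq
  have hDm : StrictMonoOn D (Set.Icc 0 1) := (hm.strictMonoOn _).congr heq.symm
  have hEm : StrictAnti E := by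
    intro x y hxy
    simp only [E]
    gcongr
  have hE1 : E 1 = 0 := by simp [E]
  have hD0 : D 0 = P_S * d := by
    have : (0 : ℝ) ≤ ρ₁ := le_min zero_le_one hr
    simp [D, this]
  have hD1 : 0 < D 1 := by
    have := hDm (Set.left_mem_Icc.2 zero_le_one) (Set.right_mem_Icc.2 zero_le_one) zero_lt_one
    have h2 : 0 < P_S * d := by positivity
    linarith
  refine ⟨hDc, hDm, hEm, hE1, hD1, fun hdg => ?_⟩
  have hE0 : E 0 = g * P_S := by simp [E]
  have hEc : ContinuousOn E (Set.Icc 0 1) := by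
    simp only [E]; fun_prop
  have ivt := intermediate_value_Ioo (zero_le_one (α := ℝ)) (hDc.sub hEc)
  have hz : (0 : ℝ) ∈ Set.Ioo (D 0 - E 0) (D 1 - E 1) := by
    rw [hE0, hD0, hE1]
    constructor
    · nlinarith
    · linarith
  obtain ⟨x, hx, hx0⟩ := ivt hz
  refine ⟨x, ⟨hx, sub_eq_zero.1 hx0⟩, ?_⟩
  rintro y ⟨hy, hy0⟩
  have hxe : D x = E x := sub_eq_zero.1 hx0
  rcases lt_trichotomy y x with h | h | h
  · have h1 := hDm (Set.Ioo_subset_Icc_self hy) (Set.Ioo_subset_Icc_self hx) h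
    have h2 := hEm h
    linarith
  · exact h
  · have h1 := hDm (Set.Ioo_subset_Icc_self hx) (Set.Ioo_subset_Icc_self hy) h
    have h2 := hEm h
    linarith
end
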